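/- arXiv:2510.25395 — 4 statements merged into one kernel-verified Lean document; each statement's English description precedes it below -/
import Mathlib

section
/- Zalesak flux limiter bound preservation: let P be a nonempty finite index set (nodes of a cell), f_p ∈ ℝ antidiffusive fluxes for p ∈ P, γ > 0, and bounds u_min ≤ ū^L ≤ u_max for the low-order cell average ū^L. Define P⁺ = ∑_p max(0, f_p), P⁻ = ∑_p min(0, f_p), Q⁺ = γ(u_max − ū^L), Q⁻ = γ(u_min − ū^L), R⁺ = min(1, Q⁺/P⁺) if P⁺ > 0 and R⁺ = 1 otherwise, R⁻ = min(1, Q⁻/P⁻) if P⁻ < 0 and R⁻ = 1 otherwise. If the correction factors α_p satisfy 0 ≤ α_p ≤ R⁺ whenever f_p ≥ 0 and 0 ≤ α_p ≤ R⁻ whenever f_p < 0, then the flux-corrected average ū^{n+1} = ū^L + (1/γ)·∑_{p∈P} α_p f_p satisfies u_min ≤ ū^{n+1} ≤ u_max. -/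
/-!
Each term satisfies `R⁻ * min 0 f_p ≤ α_p * f_p ≤ R⁺ * max 0 f_p`: a flux of the favourable sign
obeys its limiter bound, and a flux of the opposite sign contributes a product of the harmless
sign, since `α_p ≥ 0`. Summing gives `R⁻ * P⁻ ≤ ∑ α_p * f_p ≤ R⁺ * P⁺`, and the definition of the
Zalesak factors gives `R⁺ * P⁺ ≤ Q⁺` and `Q⁻ ≤ R⁻ * P⁻`. Dividing by `γ` yields the bounds.
-/

open Finset

/-- Zalesak flux limiter bound preservation: correction factors bounded by
the Zalesak factors `R⁺`, `R⁻` guarantee that the flux-corrected cell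
average stays within the prescribed bounds. -/
theorem zalesak_bound_preservation
    {ι : Type*} [Fintype ι] [Nonempty ι]
    (f : ι → ℝ)                       -- antidiffusive fluxes
    (γ uL umin umax : ℝ)
    (hγ : 0 < γ) (hmin : umin ≤ uL) (hmax : uL ≤ umax)
    (Pp Pm Qp Qm Rp Rm : ℝ)
    (hPp : Pp = ∑ p, max 0 (f p))
    (hPm : Pm = ∑ p, min 0 (f p))
    (hQp : Qp = γ * (umax - uL))
    (hQm : Qm = γ * (umin - uL))
    (hRp : Rp = if 0 < Pp then min 1 (Qp / Pp) else 1)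
    (hRm : Rm = if Pm < 0 then min 1 (Qm / Pm) else 1)
    (α : ι → ℝ)
    (hα : ∀ p, (0 ≤ f p → 0 ≤ α p ∧ α p ≤ Rp)
             ∧ (f p < 0 → 0 ≤ α p ∧ α p ≤ Rm))
    (unew : ℝ)
    (hnew : unew = uL + (1 / γ) * ∑ p, α p * f p) :
    umin ≤ unew ∧ unew ≤ umax := by
  have hα0 : ∀ p, 0 ≤ α p := fun p =>
    (le_or_gt 0 (f p)).elim (fun h => ((hα p).1 h).1) (fun h => ((hα p).2 h).1)
  have hQp0 : 0 ≤ Qp := hQp ▸ mul_nonneg hγ.le (sub_nonneg.2 hmax)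
  have hQm0 : Qm ≤ 0 := hQm ▸ mul_nonpos_of_nonneg_of_nonpos hγ.le (sub_nonpos.2 hmin)
  have hRPp : Rp * Pp ≤ Qp := by
    rw [hRp]
    split_ifs with h
    · exact (le_div_iff₀ h).1 (min_le_right _ _)
    · linarith
  have hRPm : Qm ≤ Rm * Pm := by
    rw [hRm]
    split_ifs with h
    · exact (le_div_iff_of_neg h).1 (min_le_right _ _)
    · linarith
  have hup : ∑ p, α p * f p ≤ Rp * Pp := by
    rw [hPp, mul_sum]
    refine sum_le_sum fun p _ => ?_
    rcases le_or_gt 0 (f p) with h | h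
    · rw [max_eq_right h]
      exact mul_le_mul_of_nonneg_right ((hα p).1 h).2 h
    · rw [max_eq_left h.le, mul_zero]
      exact mul_nonpos_of_nonneg_of_nonpos (hα0 p) h.le
  have hlow : Rm * Pm ≤ ∑ p, α p * f p := by
    rw [hPm, mul_sum]
    refine sum_le_sum fun p _ => ?_
    rcases le_or_gt 0 (f p) with h | h
    · rw [min_eq_left h, mul_zero]
      exact mul_nonneg (hα0 p) h
    · rw [min_eq_right h.le]
      exact mul_le_mul_of_nonpos_right ((hα p).2 h).2 h.le
  have h1 : umin - uL ≤ (∑ p, α p * f p) / γ := by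
    rw [le_div_iff₀' hγ]
    linarith
  have h2 : (∑ p, α p * f p) / γ ≤ umax - uL := by
    rw [div_le_iff₀' hγ]
    linarith
  rw [hnew, one_div_mul_eq_div]
  constructor <;> linarith
end

section
/- Global positivity preservation of the flux-corrected element averages of specific volume: let P be a nonempty finite index set, f_p ∈ ℝ for p ∈ P, γ > 0, and let the low-order cell average satisfy ū^L ≥ 0. Define P⁻ = ∑_p min(0, f_p), Q⁻ = γ(0 − ū^L), and R⁻ = min(1, Q⁻/P⁻) if P⁻ < 0, R⁻ = 1 otherwise. If the correction factors α_p satisfy 0 ≤ α_p ≤ 1 whenever f_p ≥ 0 and 0 ≤ α_p ≤ R⁻ whenever f_p < 0, then the flux-corrected average ū^{n+1} = ū^L + (1/γ)·∑_{p∈P} α_p f_p is nonnegative. -/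
open Finset

/-!
The limiter bounds the weighted sum of fluxes below by `Rm * Pm`, since nonnegative fluxes
contribute nonnegatively and each negative flux is scaled by at most `Rm`. The choice of `Rm`
gives `Rm * Pm ≥ Qm = -γ * uL`, so the update cannot remove more than the available `uL`.
-/

/-- Global positivity preservation of the flux-corrected element averages
of specific volume: with the lower bound `0` and no upper bound, the
Zalesak-limited update of a nonnegative low-order average is nonnegative. -/
theorem fct_positivity_preservation
    {ι : Type*} [Fintype ι] [Nonempty ι]
    (f : ι → ℝ)                       -- antidiffusive fluxes
    (γ uL : ℝ)
    (hγ : 0 < γ) (hL : 0 ≤ uL)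
    (Pm Qm Rm : ℝ)
    (hPm : Pm = ∑ p, min 0 (f p))
    (hQm : Qm = γ * (0 - uL))
    (hRm : Rm = if Pm < 0 then min 1 (Qm / Pm) else 1)
    (α : ι → ℝ)
    (hα : ∀ p, (0 ≤ f p → 0 ≤ α p ∧ α p ≤ 1)
             ∧ (f p < 0 → 0 ≤ α p ∧ α p ≤ Rm))
    (unew : ℝ)
    (hnew : unew = uL + (1 / γ) * ∑ p, α p * f p) :
    0 ≤ unew := by
  -- Termwise, `α p * f p ≥ Rm * min 0 (f p)`; only negative fluxes matter.
  have hsum : Rm * Pm ≤ ∑ p, α p * f p := by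
    rw [hPm, Finset.mul_sum]
    refine Finset.sum_le_sum fun p _ => ?_
    rcases le_or_gt 0 (f p) with h | h
    · rw [min_eq_left h, mul_zero]
      exact mul_nonneg ((hα p).1 h).1 h
    · rw [min_eq_right h.le]
      exact mul_le_mul_of_nonpos_right ((hα p).2 h).2 h.le
  have hQ : Qm ≤ Rm * Pm := by
    by_cases hP : Pm < 0
    · have hR : Rm ≤ Qm / Pm := by
        rw [hRm, if_pos hP]
        exact min_le_right _ _
      exact (le_div_iff_of_neg hP).1 hR
    · rw [hRm, if_neg hP, one_mul, hQm]
      nlinarith [mul_nonneg hγ.le hL]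
  have hnum : 0 ≤ γ * uL + ∑ p, α p * f p := by linarith
  have hdiv : unew = (γ * uL + ∑ p, α p * f p) / γ := by
    rw [hnew]
    field_simp
  rw [hdiv]
  exact div_nonneg hnum hγ.le
end

section
/- The clip-and-scale slope limiter enforces the zero-sum (conservation) condition: let h̃_1, …, h̃_N ∈ ℝ be the clipped element fluxes, P⁺ = ∑_j max(0, h̃_j) and P⁻ = ∑_j min(0, h̃_j), and define the limited fluxes by h*_j = −(P⁻/P⁺)·h̃_j if h̃_j > 0 and P⁺ + P⁻ > 0; h*_j = −(P⁺/P⁻)·h̃_j if h̃_j < 0 and P⁺ + P⁻ < 0; and h*_j = h̃_j otherwise. Then ∑_{j=1}^N h*_j = 0. -/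
/-! On each side of the sign of `Pp + Pm`, limiting multiplies all fluxes of the dominant sign by
one common factor and leaves the others unchanged. Splitting `h j = max 0 (h j) + min 0 (h j)`,
the limited sum is `-(Pm / Pp) * Pp + Pm` or `Pp - (Pp / Pm) * Pm`, both of which vanish because
the dominant sum is nonzero; when `Pp + Pm = 0` the fluxes already balance. -/

open Finset

/-- The clip-and-scale slope limiter enforces the zero-sum (conservation)
condition: the limited fluxes sum to zero. -/
theorem clip_and_scale_zero_sum
    {N : ℕ} (hN : 1 ≤ N)
    (h : Fin N → ℝ)                    -- clipped element fluxes
    (Pp Pm : ℝ)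
    (hPp : Pp = ∑ j, max 0 (h j))
    (hPm : Pm = ∑ j, min 0 (h j))
    (hstar : Fin N → ℝ)
    (hdef : ∀ j, hstar j =
      if 0 < h j ∧ 0 < Pp + Pm then -(Pm / Pp) * h j
      else if h j < 0 ∧ Pp + Pm < 0 then -(Pp / Pm) * h j
      else h j) :
    ∑ j, hstar j = 0 := by
  have hPm0 : Pm ≤ 0 := hPm ▸ Finset.sum_nonpos fun j _ => min_le_left _ _
  have hPp0 : 0 ≤ Pp := hPp ▸ Finset.sum_nonneg fun j _ => le_max_left _ _
  -- Each limited flux has the form `a * max 0 (h j) + b * min 0 (h j)` with `a`, `b` independent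
  -- of `j`, so it suffices that `a * Pp + b * Pm = 0`.
  have key (a b : ℝ) (hab : a * Pp + b * Pm = 0)
      (hs : ∀ j, hstar j = a * max 0 (h j) + b * min 0 (h j)) : ∑ j, hstar j = 0 := by
    rw [Finset.sum_congr rfl fun j _ => hs j, Finset.sum_add_distrib, ← Finset.mul_sum,
      ← Finset.mul_sum, ← hPp, ← hPm, hab]
  rcases lt_trichotomy (Pp + Pm) 0 with hP | hP | hP
  · have hne : Pm ≠ 0 := (by linarith : Pm < 0).ne
    refine key 1 (-(Pp / Pm)) (by field_simp; ring) fun j => ?_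
    rw [hdef j, if_neg fun hc => hP.not_gt hc.2]
    rcases lt_or_ge (h j) 0 with hj | hj
    · rw [if_pos ⟨hj, hP⟩, max_eq_left hj.le, min_eq_right hj.le]
      ring
    · rw [if_neg fun hc => hj.not_gt hc.1, max_eq_right hj, min_eq_left hj]
      ring
  · refine key 1 1 (by linarith) fun j => ?_
    rw [hdef j, if_neg fun hc => hc.2.ne' hP, if_neg fun hc => hc.2.ne hP, one_mul, one_mul,
      max_add_min, zero_add]
  · have hne : Pp ≠ 0 := (by linarith : 0 < Pp).ne'
    refine key (-(Pm / Pp)) 1 (by field_simp; ring) fun j => ?_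
    rw [hdef j]
    rcases lt_or_ge 0 (h j) with hj | hj
    · rw [if_pos ⟨hj, hP⟩, max_eq_right hj.le, min_eq_left hj.le]
      ring
    · rw [if_neg fun hc => hj.not_gt hc.1, if_neg fun hc => hP.not_gt hc.2, max_eq_left hj,
        min_eq_right hj]
      ring
end

section
/- Local bound preservation of the clip-and-scale limiter: let h̃_1, …, h̃_N ∈ ℝ satisfy h_j^min ≤ h̃_j ≤ h_j^max with h_j^min ≤ 0 ≤ h_j^max for each j, let P⁺ = ∑_j max(0, h̃_j), P⁻ = ∑_j min(0, h̃_j), and define h*_j = −(P⁻/P⁺)·h̃_j if h̃_j > 0 and P⁺ + P⁻ > 0; h*_j = −(P⁺/P⁻)·h̃_j if h̃_j < 0 and P⁺ + P⁻ < 0; and h*_j = h̃_j otherwise. Then h_j^min ≤ h*_j ≤ h_j^max for every j. -/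
open Finset

/-! The bounds define an interval that contains `0` and the clipped flux. Scaling a flux by a factor
in `[0, 1]` moves it along the segment towards `0`, so by convexity it stays in the interval. The
limiter's factor `-(Pm / Pp)` (resp. `-(Pp / Pm)`) lies in `[0, 1]` because `Pm ≤ 0 ≤ Pp` and the
sign with the larger total is the one that is scaled. -/

theorem scaled_mem_bounds {a b c x : ℝ} (ha : a ≤ 0) (hb : 0 ≤ b) (hax : a ≤ x) (hxb : x ≤ b)
    (hc : 0 ≤ c) (hc1 : c ≤ 1) : a ≤ c * x ∧ c * x ≤ b := by
  constructor <;> nlinarith [mul_nonneg hc (sub_nonneg.2 hax), mul_nonneg hc (sub_nonneg.2 hxb),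
    mul_nonneg (sub_nonneg.2 hc1) (neg_nonneg.2 ha), mul_nonneg (sub_nonneg.2 hc1) hb]

/-- Local bound preservation of the clip-and-scale limiter: the scaled
fluxes satisfy the same local flux bounds as the clipped fluxes. -/
theorem clip_and_scale_bound_preservation
    {N : ℕ} (hN : 1 ≤ N)
    (h : Fin N → ℝ)                    -- clipped element fluxes
    (hmin hmax : Fin N → ℝ)            -- local flux bounds
    (hsign : ∀ j, hmin j ≤ 0 ∧ 0 ≤ hmax j)
    (hbounds : ∀ j, hmin j ≤ h j ∧ h j ≤ hmax j)
    (Pp Pm : ℝ)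
    (hPp : Pp = ∑ j, max 0 (h j))
    (hPm : Pm = ∑ j, min 0 (h j))
    (hstar : Fin N → ℝ)
    (hdef : ∀ j, hstar j =
      if 0 < h j ∧ 0 < Pp + Pm then -(Pm / Pp) * h j
      else if h j < 0 ∧ Pp + Pm < 0 then -(Pp / Pm) * h j
      else h j) :
    ∀ j, hmin j ≤ hstar j ∧ hstar j ≤ hmax j := by
  have hp : 0 ≤ Pp := hPp ▸ Finset.sum_nonneg fun j _ => le_max_left 0 (h j)
  have hm : Pm ≤ 0 := hPm ▸ Finset.sum_nonpos fun j _ => min_le_left 0 (h j)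
  intro j
  obtain ⟨ha, hb⟩ := hsign j
  obtain ⟨hax, hxb⟩ := hbounds j
  rw [hdef j]
  split_ifs with h1 h2
  · have hpos : 0 < Pp := by linarith [h1.2]
    refine scaled_mem_bounds ha hb hax hxb ?_ ?_
    · rw [← neg_div]
      exact div_nonneg (neg_nonneg.2 hm) hp
    · rw [← neg_div, div_le_one hpos]
      linarith [h1.2]
  · have hneg : 0 < -Pm := by linarith [h2.2]
    refine scaled_mem_bounds ha hb hax hxb ?_ ?_
    · rw [← div_neg]
      exact div_nonneg hp hneg.le
    · rw [← div_neg, div_le_one hneg]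
      linarith [h2.2]
  · exact ⟨hax, hxb⟩
end
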